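/- Let ρ ∈ (−1, 1) and n ≥ 1, and let Z₁, …, Zₙ be independent and identically distributed random variables each distributed as Z = XY, where X and V are independent standard normal random variables and Y = ρX + √(1 − ρ²)V. Set W = Z₁ + ⋯ + Zₙ. Then for every twice differentiable function f : ℝ → ℝ such that E|f(W)|, E|W f(W)|, E|f'(W)|, E|W f'(W)| and E|W f''(W)| are all finite, one has E[(W − nρ) f(W)] = E[(1 − ρ²) W f''(W) + (n(1 − ρ²) + 2ρW) f'(W)]. -/

import Mathlib

open MeasureTheory ProbabilityTheory

/-- The law of `Z = XY` where `X, V` are independent standard normals and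
`Y = ρX + √(1 − ρ²)V`. -/
noncomputable def lawZ (ρ : ℝ) : Measure ℝ :=
  Measure.map (fun p : ℝ × ℝ => p.1 * (ρ * p.1 + Real.sqrt (1 - ρ ^ 2) * p.2))
    ((gaussianReal 0 1).prod (gaussianReal 0 1))

open Real Set Filter Topology

/-!
Put `θ = ρ` and `v = 1 - ρ²`. Given `X`, the product `Z` is normal with mean `θ X²` and variance
`v X²`, and `X²` is chi-squared, so `Z` has the law of `θ R + √(v R) V` with `R` chi-squared with
one degree of freedom. By characteristic functions, summing independent copies adds the degrees of
freedom, so `W` has the law of `θ R + √(v R) V` with `R` chi-squared with `r = n` degrees of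
freedom. Its density `p` is an exponential times a power of `|x|` times a Bessel function.

Size-biasing `R` replaces `r` by `r + 2`, and for `q(x) = r p_{r+2}(x) = E[R | W = x] p(x)` the
Bessel recurrences become, away from `0`,
`v q' = θ q - x p` and `v (x p)' = r v p + θ x p - (v + θ²) q`.
Hence `p (v x f'' + (r v + 2 θ x) f' - (x - r θ) f)` is the derivative of the flux
`F = v x p f' + (θ x p + (v + θ²) q) f`. Although `p` may be unbounded at `0`, both `x p` and `q`
are continuous there, and `q / p` grows at most linearly, so that the moment conditions on `f` make
`F` integrable. An integrable function with integrable derivative has `∫ F' = 0`.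
-/

lemma integral_eq_zero_of_hasDerivAt_of_ne_of_integrable {E : Type*} [NormedAddCommGroup E]
    [NormedSpace ℝ E] [CompleteSpace E] {F F' : ℝ → E} {c : ℝ} (hcont : ContinuousAt F c)
    (hderiv : ∀ x, x ≠ c → HasDerivAt F (F' x) x) (hF' : Integrable F') (hF : Integrable F) :
    ∫ x, F' x = 0 := by
  have hleft : ∀ x ∈ Iio c, HasDerivAt F (F' x) x := fun x hx => hderiv x hx.ne
  have hright : ∀ x ∈ Ioi c, HasDerivAt F (F' x) x := fun x hx => hderiv x hx.ne'
  have hbot : Tendsto F atBot (𝓝 0) :=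
    tendsto_zero_of_hasDerivAt_of_integrableOn_Iic (a := c - 1)
      (fun x hx => hderiv x (by linarith [mem_Iic.1 hx])) hF'.integrableOn hF.integrableOn
  have htop : Tendsto F atTop (𝓝 0) :=
    tendsto_zero_of_hasDerivAt_of_integrableOn_Ioi hright hF'.integrableOn hF.integrableOn
  rw [← intervalIntegral.integral_Iic_add_Ioi (b := c) hF'.integrableOn hF'.integrableOn,
    integral_Iic_of_hasDerivAt_of_tendsto hcont.continuousWithinAt hleft hF'.integrableOn hbot,
    integral_Ioi_of_hasDerivAt_of_tendsto hcont.continuousWithinAt hright hF'.integrableOn htop]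
  abel

/-! ### The generalised inverse Gaussian integral -/

/-- The integral `∫₀^∞ s ^ a * exp (-α s - β / s) ds` normalising the generalised inverse Gaussian
distribution. For `α, β > 0` it equals `2 (β / α) ^ ((a + 1) / 2) K_{a + 1}(2 √(α β))`, where `K` is
the modified Bessel function of the second kind. -/
noncomputable def gigIntegral (a α β : ℝ) : ℝ :=
  ∫ s in Ioi (0 : ℝ), s ^ a * exp (-α * s - β / s)

lemma gigIntegral_nonneg (a α β : ℝ) : 0 ≤ gigIntegral a α β :=
  setIntegral_nonneg measurableSet_Ioi fun s hs => by
    have := mem_Ioi.1 hs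
    positivity

lemma measurable_gigIntegral (a α : ℝ) : Measurable (gigIntegral a α) := by
  have : StronglyMeasurable fun p : ℝ × ℝ => p.2 ^ a * exp (-α * p.2 - p.1 / p.2) :=
    Measurable.stronglyMeasurable (by fun_prop)
  exact (this.integral_prod_right (ν := volume.restrict (Ioi 0))).measurable

lemma integrableOn_rpow_mul_exp_neg_mul {a α : ℝ} (hα : 0 < α) (ha : -1 < a) :
    IntegrableOn (fun s : ℝ => s ^ a * exp (-α * s)) (Ioi 0) := by
  simpa using integrableOn_rpow_mul_exp_neg_mul_rpow (p := 1) ha one_pos hα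

lemma exp_neg_div_le_pow {β s : ℝ} (hβ : 0 < β) (hs : 0 < s) (k : ℕ) :
    exp (-(β / s)) ≤ k.factorial / β ^ k * s ^ k := by
  have h := pow_div_factorial_le_exp (x := β / s) (by positivity) k
  rw [exp_neg, inv_le_comm₀ (exp_pos _) (by positivity)]
  exact (by rw [div_pow]; field_simp : _ = (β / s) ^ k / k.factorial).trans_le h

lemma integrableOn_gigIntegrand (a : ℝ) {α β : ℝ} (hα : 0 < α) (hβ : 0 < β) :
    IntegrableOn (fun s : ℝ => s ^ a * exp (-α * s - β / s)) (Ioi 0) := by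
  obtain ⟨k, hk⟩ := exists_nat_gt (-1 - a)
  refine Integrable.mono' ((integrableOn_rpow_mul_exp_neg_mul (a := a + k) hα
    (by linarith)).const_mul (k.factorial / β ^ k)) (by fun_prop) ?_
  filter_upwards [ae_restrict_mem measurableSet_Ioi] with s hs
  rw [mem_Ioi] at hs
  rw [norm_of_nonneg (by positivity), sub_eq_add_neg, exp_add, rpow_add_natCast hs.ne']
  calc s ^ a * (exp (-α * s) * exp (-(β / s)))
      ≤ s ^ a * (exp (-α * s) * (k.factorial / β ^ k * s ^ k)) := by
        gcongr
        exact exp_neg_div_le_pow hβ hs k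
    _ = k.factorial / β ^ k * (s ^ a * s ^ k * exp (-α * s)) := by ring

lemma hasDerivAt_gigIntegral (a : ℝ) {α β : ℝ} (hα : 0 < α) (hβ : 0 < β) :
    HasDerivAt (gigIntegral a α) (-gigIntegral (a - 1) α β) β := by
  rw [gigIntegral, ← integral_neg]
  refine (hasDerivAt_integral_of_dominated_loc_of_deriv_le (μ := volume.restrict (Ioi 0))
    (x₀ := β) (s := Ioi (β / 2)) (F := fun y s : ℝ => s ^ a * exp (-α * s - y / s))
    (F' := fun y s => -(s ^ (a - 1) * exp (-α * s - y / s)))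
    (bound := fun s => s ^ (a - 1) * exp (-α * s - β / 2 / s)) (Ioi_mem_nhds (by linarith))
    (Eventually.of_forall fun y => by fun_prop) (integrableOn_gigIntegrand a hα hβ) (by fun_prop)
    ?_ (integrableOn_gigIntegrand (a - 1) hα (half_pos hβ)) ?_).2
  · filter_upwards [ae_restrict_mem measurableSet_Ioi] with s hs y hy
    rw [mem_Ioi] at hs hy
    rw [norm_neg, norm_of_nonneg (by positivity)]
    gcongr
  · filter_upwards [ae_restrict_mem measurableSet_Ioi] with s hs y _
    have hderiv := (((hasDerivAt_id y).div_const s).const_sub (-α * s)).exp.const_mul (s ^ a)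
    refine hderiv.congr_deriv ?_
    rw [rpow_sub_one (mem_Ioi.1 hs).ne', id]
    ring

lemma tendsto_gigIntegrand_nhdsGT_zero (a α : ℝ) {β : ℝ} (hβ : 0 < β) :
    Tendsto (fun s : ℝ => s ^ a * exp (-α * s - β / s)) (𝓝[>] 0) (𝓝 0) := by
  have hinv : Tendsto (fun s : ℝ => s⁻¹ ^ (-a) * exp (-β * s⁻¹)) (𝓝[>] 0) (𝓝 0) :=
    (tendsto_rpow_mul_exp_neg_mul_atTop_nhds_zero (-a) β hβ).comp tendsto_inv_nhdsGT_zero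
  have hexp : Tendsto (fun s => exp (-α * s)) (𝓝[>] 0) (𝓝 1) := by
    have : Continuous fun s => exp (-α * s) := by fun_prop
    simpa using (this.tendsto 0).mono_left nhdsWithin_le_nhds
  refine Tendsto.congr' ?_ (by simpa using hinv.mul hexp)
  filter_upwards [self_mem_nhdsWithin] with s hs
  rw [inv_rpow (le_of_lt hs), rpow_neg (le_of_lt hs), inv_inv, mul_assoc, ← exp_add]
  ring_nf

lemma tendsto_gigIntegrand_atTop (a : ℝ) {α β : ℝ} (hα : 0 < α) (hβ : 0 ≤ β) :
    Tendsto (fun s : ℝ => s ^ a * exp (-α * s - β / s)) atTop (𝓝 0) := by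
  refine squeeze_zero' ?_ ?_ (tendsto_rpow_mul_exp_neg_mul_atTop_nhds_zero a α hα) <;>
    filter_upwards [eventually_gt_atTop 0] with s hs
  · positivity
  · gcongr
    exact sub_le_self _ (by positivity)

lemma gigIntegral_recurrence (a : ℝ) {α β : ℝ} (hα : 0 < α) (hβ : 0 < β) :
    α * gigIntegral a α β = a * gigIntegral (a - 1) α β + β * gigIntegral (a - 2) α β := by
  have hint := fun b => integrableOn_gigIntegrand b hα hβ
  have hpow : ∀ s ∈ Ioi (0 : ℝ), HasDerivAt (fun s : ℝ => s ^ a) (a * s ^ (a - 1)) s :=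
    fun s hs => hasDerivAt_rpow_const (Or.inl (ne_of_gt hs))
  have hexp : ∀ s ∈ Ioi (0 : ℝ), HasDerivAt (fun s : ℝ => exp (-α * s - β / s))
      (exp (-α * s - β / s) * (-α + β / s ^ 2)) s := by
    intro s hs
    refine (((hasDerivAt_id s).const_mul (-α)).sub
      ((hasDerivAt_inv (ne_of_gt hs)).const_mul β)).exp.congr_deriv ?_
    simp only [id, Pi.sub_apply]
    ring_nf
  have hderiv : EqOn (fun s : ℝ => a * (s ^ (a - 1) * exp (-α * s - β / s))
        - α * (s ^ a * exp (-α * s - β / s)) + β * (s ^ (a - 2) * exp (-α * s - β / s)))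
      (fun s => a * s ^ (a - 1) * exp (-α * s - β / s)
        + s ^ a * (exp (-α * s - β / s) * (-α + β / s ^ 2))) (Ioi 0) := by
    intro s hs
    have : s ^ (a - 2) = s ^ a / s ^ 2 := mod_cast rpow_sub_natCast (ne_of_gt hs) a 2
    simp only [this]
    ring
  have hsub : IntegrableOn (fun s : ℝ => a * (s ^ (a - 1) * exp (-α * s - β / s))
      - α * (s ^ a * exp (-α * s - β / s))) (Ioi 0) :=
    ((hint (a - 1)).const_mul a).sub ((hint a).const_mul α)
  have hadd := (hint (a - 2)).const_mul β
  have hparts := integral_Ioi_deriv_mul_eq_sub hpow hexp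
    (IntegrableOn.congr_fun (hsub.add hadd) hderiv measurableSet_Ioi)
    (tendsto_gigIntegrand_nhdsGT_zero a α hβ) (tendsto_gigIntegrand_atTop a hα hβ.le)
  rw [← setIntegral_congr_fun measurableSet_Ioi hderiv, integral_add hsub hadd,
    integral_sub ((hint (a - 1)).const_mul a) ((hint a).const_mul α), integral_const_mul,
    integral_const_mul, integral_const_mul] at hparts
  simp only [gigIntegral]
  linarith

/-- Integrate `2 c s ≤ s ^ 2 + c ^ 2`. -/
lemma two_mul_gigIntegral_add_one_le (a c : ℝ) {α β : ℝ} (hα : 0 < α) (hβ : 0 < β) :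
    2 * c * gigIntegral (a + 1) α β ≤ gigIntegral (a + 2) α β + c ^ 2 * gigIntegral a α β := by
  have hint := fun b => integrableOn_gigIntegrand b hα hβ
  rw [gigIntegral, gigIntegral, gigIntegral, ← integral_const_mul, ← integral_const_mul,
    ← integral_add (hint (a + 2)) ((hint a).const_mul (c ^ 2))]
  refine setIntegral_mono_on ((hint (a + 1)).const_mul (2 * c))
    ((hint (a + 2)).add ((hint a).const_mul (c ^ 2))) measurableSet_Ioi fun s hs => ?_
  have hs : 0 < s := hs
  have hweight : 0 ≤ s ^ a * exp (-α * s - β / s) := by positivity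
  have hpow : s ^ (a + 2) = s ^ a * s ^ 2 := mod_cast rpow_add_natCast hs.ne' a 2
  simp only [hpow, rpow_add_one hs.ne']
  nlinarith [mul_nonneg hweight (sq_nonneg (s - c))]

/-- Insert the recurrence into the quadratic bound with `c = √(β / α) + (a + 2) / α`. -/
lemma gigIntegral_add_one_le {a α β : ℝ} (ha : -2 ≤ a) (hα : 0 < α) (hβ : 0 < β) :
    gigIntegral (a + 1) α β ≤ (√(β / α) + (a + 2) / α) * gigIntegral a α β := by
  have hw : 0 < √(β / α) := by positivity
  have hβw : β = α * √(β / α) ^ 2 := by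
    rw [sq_sqrt (by positivity)]
    field_simp
  have hk : 0 ≤ (a + 2) / α := div_nonneg (by linarith) hα.le
  have hka : a + 2 = α * ((a + 2) / α) := by field_simp
  have hrec : gigIntegral (a + 2) α β = (a + 2) / α * gigIntegral (a + 1) α β
      + √(β / α) ^ 2 * gigIntegral a α β := by
    have h := gigIntegral_recurrence (a + 2) hα hβ
    rw [show a + 2 - 1 = a + 1 by ring, add_sub_cancel_right] at h
    rw [sq_sqrt (by positivity)]
    field_simp
    linarith
  have hquad := two_mul_gigIntegral_add_one_le a (√(β / α) + (a + 2) / α) hα hβ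
  have hJ := gigIntegral_nonneg a α β
  generalize √(β / α) = w at *
  generalize (a + 2) / α = k at *
  have hpos : 0 < 2 * w + k := by positivity
  refine le_of_mul_le_mul_left ?_ hpos
  nlinarith [mul_nonneg (mul_nonneg hw.le hk) hJ]

lemma continuous_gigIntegral_sq {a α γ : ℝ} (ha : -1 < a) (hα : 0 < α) (hγ : 0 ≤ γ) :
    Continuous fun x => gigIntegral a α (γ * x ^ 2) := by
  refine continuous_of_dominated (bound := fun s => s ^ a * exp (-α * s))
    (fun x => by fun_prop) (fun x => ?_) (integrableOn_rpow_mul_exp_neg_mul hα ha)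
    (Eventually.of_forall fun s => by fun_prop)
  filter_upwards [ae_restrict_mem measurableSet_Ioi] with s hs
  rw [mem_Ioi] at hs
  rw [norm_of_nonneg (by positivity)]
  gcongr
  exact sub_le_self _ (by positivity)

lemma abs_mul_exp_neg_sq_le_one (y : ℝ) : |y| * exp (-y ^ 2) ≤ 1 := by
  rw [exp_neg, ← div_eq_mul_inv, div_le_one (exp_pos _)]
  nlinarith [add_one_le_exp (y ^ 2), sq_nonneg (|y| - 1), sq_abs y]

lemma abs_mul_exp_neg_mul_sq_div_le {γ s : ℝ} (hγ : 0 < γ) (hs : 0 < s) (x : ℝ) :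
    |x| * exp (-(γ * x ^ 2 / s)) ≤ √s / √γ := by
  have h := abs_mul_exp_neg_sq_le_one (√γ * x / √s)
  rw [div_pow, mul_pow, sq_sqrt hγ.le, sq_sqrt hs.le, abs_div, abs_mul,
    abs_of_nonneg (sqrt_nonneg γ), abs_of_nonneg (sqrt_nonneg s)] at h
  rw [le_div_iff₀ (by positivity)]
  rw [div_mul_eq_mul_div, div_le_one (by positivity)] at h
  linarith

lemma continuous_mul_gigIntegral_sq {a α γ : ℝ} (ha : -(3 / 2) < a) (hα : 0 < α) (hγ : 0 < γ) :
    Continuous fun x => x * gigIntegral a α (γ * x ^ 2) := by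
  simp_rw [gigIntegral, ← integral_const_mul]
  refine continuous_of_dominated
    (bound := fun s => (√γ)⁻¹ * (s ^ (a + 1 / 2) * exp (-α * s))) (fun x => by fun_prop)
    (fun x => ?_) ((integrableOn_rpow_mul_exp_neg_mul hα (by linarith)).const_mul _)
    (Eventually.of_forall fun s => by fun_prop)
  filter_upwards [ae_restrict_mem measurableSet_Ioi] with s hs
  rw [mem_Ioi] at hs
  rw [norm_mul, norm_of_nonneg (r := _ * _) (by positivity), sub_eq_add_neg, exp_add,
    rpow_add hs, ← sqrt_eq_rpow, norm_eq_abs]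
  calc |x| * (s ^ a * (exp (-α * s) * exp (-(γ * x ^ 2 / s))))
      = s ^ a * exp (-α * s) * (|x| * exp (-(γ * x ^ 2 / s))) := by ring
    _ ≤ s ^ a * exp (-α * s) * (√s / √γ) := by
        gcongr
        exact abs_mul_exp_neg_mul_sq_div_le hγ hs x
    _ = (√γ)⁻¹ * (s ^ a * √s * exp (-α * s)) := by ring

/-! ### The variance-gamma law -/

lemma integrable_cexp_ofReal_mul_I {S : Type*} [MeasurableSpace S] {μ : Measure S}
    [IsFiniteMeasure μ] {g : S → ℝ} (hg : Measurable g) (t : ℝ) :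
    Integrable (fun p => Complex.exp (t * (g p : ℝ) * Complex.I)) μ := by
  refine Integrable.of_bound (C := 1) (by fun_prop) (Eventually.of_forall fun p => ?_)
  rw [← Complex.ofReal_mul, Complex.norm_exp_ofReal_mul_I]

lemma integral_cexp_affine_gaussianReal (t m σ : ℝ) :
    ∫ y, Complex.exp (t * (m + σ * y : ℝ) * Complex.I) ∂(gaussianReal 0 1)
      = Complex.exp (t * m * Complex.I - t ^ 2 * σ ^ 2 / 2) := by
  have hsplit : ∀ y : ℝ, Complex.exp (t * (m + σ * y : ℝ) * Complex.I)
      = Complex.exp (t * m * Complex.I) * Complex.exp ((t * σ : ℝ) * y * Complex.I) := by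
    intro y
    rw [← Complex.exp_add]
    push_cast
    ring_nf
  simp_rw [hsplit]
  rw [integral_const_mul, ← charFun_apply_real, charFun_gaussianReal, ← Complex.exp_add]
  push_cast
  ring_nf

lemma charFun_map_mul_add_mul_prod_gaussianReal {S : Type*} [MeasurableSpace S] {μ : Measure S}
    [IsFiniteMeasure μ] {R σ : S → ℝ} {v : ℝ} (hR : Measurable R) (hσ : Measurable σ)
    (hσR : ∀ᵐ s ∂μ, σ s ^ 2 = v * R s) (θ t : ℝ) :
    charFun ((μ.prod (gaussianReal 0 1)).map fun p => θ * R p.1 + σ p.1 * p.2) t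
      = complexMGF R μ (θ * t * Complex.I - v * t ^ 2 / 2) := by
  have hg : Measurable fun p : S × ℝ => θ * R p.1 + σ p.1 * p.2 := by fun_prop
  rw [charFun_apply_real, integral_map hg.aemeasurable (by fun_prop),
    integral_prod _ (integrable_cexp_ofReal_mul_I hg t), complexMGF]
  refine integral_congr_ae ?_
  filter_upwards [hσR] with s hs
  rw [integral_cexp_affine_gaussianReal, ← Complex.ofReal_pow (σ s), hs]
  push_cast
  ring_nf

lemma one_sub_div_mem_slitPlane {b : ℝ} (hb : 0 < b) {z : ℂ} (hz : z.re < b) :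
    1 - z / b ∈ Complex.slitPlane := by
  left
  rwa [Complex.sub_re, Complex.one_re, Complex.div_ofReal_re, sub_pos, div_lt_one hb]

/-- Both sides are analytic on the half-plane `re z < b` and agree on its real points. -/
lemma complexMGF_eq_one_sub_div_cpow {S : Type*} [MeasurableSpace S] {μ : Measure S} {X : S → ℝ}
    {a b : ℝ} (hb : 0 < b) (hmgf : ∀ t < b, mgf X μ t = (1 - t / b) ^ (-a)) {z : ℂ}
    (hz : z.re < b) : complexMGF X μ z = (1 - z / b) ^ (-a : ℂ) := by
  have hpos : ∀ t < b, 0 < 1 - t / b := fun t ht => by rwa [sub_pos, div_lt_one hb]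
  have hset : Iio b ⊆ integrableExpSet X μ := by
    intro t ht
    by_contra hnot
    exact (rpow_pos_of_pos (hpos t ht) (-a)).ne' ((hmgf t ht).symm.trans (integral_undef hnot))
  have hleft : AnalyticOnNhd ℂ (complexMGF X μ) {w : ℂ | w.re < b} :=
    analyticOnNhd_complexMGF.mono fun w hw => interior_maximal hset isOpen_Iio hw
  have hright : AnalyticOnNhd ℂ (fun w : ℂ => (1 - w / b) ^ (-a : ℂ)) {w : ℂ | w.re < b} :=
    DifferentiableOn.analyticOnNhd (DifferentiableOn.cpow (by fun_prop) (by fun_prop)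
      fun w hw => one_sub_div_mem_slitPlane hb hw)
      (isOpen_lt Complex.continuous_re continuous_const)
  have hreal : ∀ᶠ t : ℝ in 𝓝[≠] 0, complexMGF X μ t = (1 - (t : ℂ) / b) ^ (-a : ℂ) := by
    filter_upwards [nhdsWithin_le_nhds (Iio_mem_nhds hb)] with t ht
    rw [complexMGF_ofReal, hmgf t ht, Complex.ofReal_cpow (hpos t ht).le]
    push_cast
    rfl
  have hofReal : Tendsto ((↑) : ℝ → ℂ) (𝓝[≠] 0) (𝓝[≠] ((0 : ℝ) : ℂ)) :=
    Complex.continuous_ofReal.continuousWithinAt.tendsto_nhdsWithin fun t ht => by simpa using ht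
  exact hleft.eqOn_of_preconnected_of_frequently_eq hright
    (convex_halfSpace_re_lt b).isPreconnected (by simpa using hb)
    (hofReal.frequently hreal.frequently) hz

lemma mgf_gammaMeasure {a b t : ℝ} (ha : 0 < a) (hb : 0 < b) (ht : t < b) :
    mgf id (gammaMeasure a b) t = (1 - t / b) ^ (-a) := by
  have : 0 < Gamma a := Gamma_pos_of_pos ha
  have hbt : 0 < b - t := sub_pos.2 ht
  have hdensity : EqOn (fun s : ℝ => (gammaPDF a b s).toReal • exp (t * id s))
      (fun s => b ^ a / Gamma a * (s ^ (a - 1) * exp (-((b - t) * s)))) (Ioi 0) := by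
    intro s hs
    rw [mem_Ioi] at hs
    simp only [id]
    rw [gammaPDF_of_nonneg hs.le, ENNReal.toReal_ofReal (by positivity), smul_eq_mul, mul_assoc,
      mul_assoc, ← exp_add]
    ring_nf
  rw [mgf, gammaMeasure, integral_withDensity_eq_integral_toReal_smul
    (by unfold gammaPDF; fun_prop) (by simp [gammaPDF]),
    ← setIntegral_eq_integral_of_forall_compl_eq_zero (s := Ici 0)
    (fun s hs => by rw [gammaPDF_of_neg (by simpa using hs)]; simp), integral_Ici_eq_integral_Ioi,
    setIntegral_congr_fun measurableSet_Ioi hdensity, integral_const_mul,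
    integral_rpow_mul_exp_neg_mul_Ioi ha hbt, one_sub_div hb.ne', rpow_neg (by positivity),
    div_rpow hbt.le hb.le, div_rpow one_pos.le hbt.le, one_rpow]
  field_simp

lemma mgf_sq_gaussianReal {t : ℝ} (ht : t < 1 / 2) :
    mgf (fun x => x ^ 2) (gaussianReal 0 1) t = (1 - t / (1 / 2)) ^ (-(1 / 2) : ℝ) := by
  have hpos : 0 < 1 - t / (1 / 2) := by linarith
  have hdensity : ∀ x : ℝ, gaussianPDFReal 0 1 x • exp (t * x ^ 2)
      = (√(2 * π))⁻¹ * exp (-(1 / 2 - t) * x ^ 2) := by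
    intro x
    simp only [gaussianPDFReal, NNReal.coe_one, mul_one, sub_zero, smul_eq_mul]
    rw [mul_assoc, ← exp_add]
    ring_nf
  rw [mgf, integral_gaussianReal_eq_integral_smul one_ne_zero]
  simp_rw [hdensity]
  rw [integral_const_mul, integral_gaussian, rpow_neg hpos.le, ← sqrt_eq_rpow, ← sqrt_inv,
    ← sqrt_mul (by positivity), ← sqrt_inv]
  congr 1
  field_simp

/-- The law of `θ R + √(v R) V`, where `R` is chi-squared with `r` degrees of freedom and `V` is an
independent standard normal; the parameter `r > 0` need not be an integer. -/
noncomputable def varianceGamma (r θ v : ℝ) : Measure ℝ :=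
  ((gammaMeasure (r / 2) (1 / 2)).prod (gaussianReal 0 1)).map
    fun p => θ * p.1 + √(v * p.1) * p.2

lemma isProbabilityMeasure_varianceGamma {r : ℝ} (hr : 0 < r) (θ v : ℝ) :
    IsProbabilityMeasure (varianceGamma r θ v) := by
  have := isProbabilityMeasure_gammaMeasure (half_pos hr) (one_half_pos (α := ℝ))
  exact Measure.isProbabilityMeasure_map (by fun_prop)

lemma ae_nonneg_gammaMeasure (a b : ℝ) : ∀ᵐ s ∂(gammaMeasure a b), 0 ≤ s := by
  rw [gammaMeasure, ae_withDensity_iff (by unfold gammaPDF; fun_prop)]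
  exact Eventually.of_forall fun s hs => not_lt.1 fun hneg => hs (gammaPDF_of_neg hneg)

lemma re_mul_I_sub_lt_half (θ t : ℝ) {v : ℝ} (hv : 0 ≤ v) :
    (θ * t * Complex.I - v * t ^ 2 / 2 : ℂ).re < (1 / 2 : ℝ) := by
  have hre : (θ * t * Complex.I - v * t ^ 2 / 2 : ℂ).re = -(v * t ^ 2 / 2) := by
    rw [← Complex.ofReal_pow, Complex.sub_re, mul_assoc, Complex.re_ofReal_mul]
    simp [-Complex.ofReal_pow]
  rw [hre]
  have : 0 ≤ v * t ^ 2 := by positivity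
  linarith

lemma charFun_varianceGamma {r v : ℝ} (hr : 0 < r) (hv : 0 ≤ v) (θ t : ℝ) :
    charFun (varianceGamma r θ v) t
      = (1 - (θ * t * Complex.I - v * t ^ 2 / 2) / (1 / 2 : ℝ)) ^ (-(r / 2 : ℝ) : ℂ) := by
  have := isProbabilityMeasure_gammaMeasure (half_pos hr) (one_half_pos (α := ℝ))
  have hsq : ∀ᵐ s ∂(gammaMeasure (r / 2) (1 / 2)), √(v * s) ^ 2 = v * id s := by
    filter_upwards [ae_nonneg_gammaMeasure _ _] with s hs
    exact sq_sqrt (by positivity)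
  exact (charFun_map_mul_add_mul_prod_gaussianReal measurable_id (by fun_prop) hsq θ t).trans
    (complexMGF_eq_one_sub_div_cpow one_half_pos
      (fun _ hs => mgf_gammaMeasure (half_pos hr) one_half_pos hs) (re_mul_I_sub_lt_half θ t hv))

/-- The square of a standard normal is chi-squared with one degree of freedom. -/
lemma lawZ_eq_varianceGamma {ρ : ℝ} (hρ : ρ ^ 2 ≤ 1) :
    lawZ ρ = varianceGamma 1 ρ (1 - ρ ^ 2) := by
  have hv : 0 ≤ 1 - ρ ^ 2 := by linarith
  have := isProbabilityMeasure_varianceGamma one_pos ρ (1 - ρ ^ 2)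
  have hlaw : lawZ ρ = ((gaussianReal 0 1).prod (gaussianReal 0 1)).map
      fun p => ρ * p.1 ^ 2 + √(1 - ρ ^ 2) * p.1 * p.2 := by
    rw [lawZ]
    congr 1
    ext p
    ring
  have hsq : ∀ᵐ x ∂(gaussianReal 0 1), (√(1 - ρ ^ 2) * x) ^ 2 = (1 - ρ ^ 2) * x ^ 2 :=
    Eventually.of_forall fun x => by rw [mul_pow, sq_sqrt hv]
  have : IsFiniteMeasure (lawZ ρ) := by unfold lawZ; infer_instance
  refine Measure.ext_of_charFun (funext fun t => ?_)
  rw [charFun_varianceGamma one_pos hv, hlaw]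
  exact (charFun_map_mul_add_mul_prod_gaussianReal (by fun_prop) (by fun_prop) hsq ρ t).trans
    (complexMGF_eq_one_sub_div_cpow one_half_pos (fun _ hs => mgf_sq_gaussianReal hs)
      (re_mul_I_sub_lt_half ρ t hv))

lemma hasLaw_sum_varianceGamma {Ω ι : Type*} [MeasurableSpace Ω] {P : Measure Ω}
    [Fintype ι] [Nonempty ι] {X : ι → Ω → ℝ} {r : ι → ℝ} {θ v : ℝ} (hr : ∀ i, 0 < r i)
    (hv : 0 ≤ v) (hindep : iIndepFun X P) (hX : ∀ i, HasLaw (X i) (varianceGamma (r i) θ v) P) :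
    HasLaw (fun ω => ∑ i, X i ω) (varianceGamma (∑ i, r i) θ v) P := by
  have hmeas := fun i => (hX i).aemeasurable
  have hsum : 0 < ∑ i, r i := Finset.sum_pos (fun i _ => hr i) Finset.univ_nonempty
  have := isProbabilityMeasure_varianceGamma hsum θ v
  have := hindep.isProbabilityMeasure
  refine ⟨Finset.aemeasurable_fun_sum _ fun i _ => hmeas i, Measure.ext_of_charFun ?_⟩
  ext t
  have hbase : (1 - (θ * t * Complex.I - v * t ^ 2 / 2) / (1 / 2 : ℝ) : ℂ) ≠ 0 :=
    Complex.slitPlane_ne_zero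
      (one_sub_div_mem_slitPlane one_half_pos (re_mul_I_sub_lt_half θ t hv))
  rw [hindep.charFun_map_fun_sum_eq_prod hmeas, charFun_varianceGamma hsum hv, Finset.prod_apply]
  simp_rw [(hX _).map_eq, charFun_varianceGamma (hr _) hv]
  simp_rw [Complex.cpow_def_of_ne_zero hbase]
  rw [← Complex.exp_sum, ← Finset.mul_sum]
  push_cast
  rw [Finset.sum_neg_distrib, Finset.sum_div]

/-! ### The variance-gamma density -/

/-- The factor of the density `varianceGammaPDFReal` that does not depend on its argument. -/
noncomputable def varianceGammaConst (r v : ℝ) : ℝ :=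
  (1 / 2) ^ (r / 2) / Gamma (r / 2) * (√(2 * π * v))⁻¹

/-- The density of `varianceGamma r θ v`, as the mixture over the chi-squared variable `s` of the
normal densities with mean `θ s` and variance `v s`. For `r ≤ 1` the density is unbounded at `0`,
where the definition takes the junk value `0` of a divergent integral. -/
noncomputable def varianceGammaPDFReal (r θ v x : ℝ) : ℝ :=
  varianceGammaConst r v * exp (θ / v * x)
    * gigIntegral ((r - 3) / 2) ((v + θ ^ 2) / (2 * v)) ((2 * v)⁻¹ * x ^ 2)

section

variable {r v : ℝ}

lemma varianceGammaConst_nonneg (hr : 0 ≤ r) (v : ℝ) : 0 ≤ varianceGammaConst r v := by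
  have := Gamma_nonneg_of_nonneg (s := r / 2) (by positivity)
  unfold varianceGammaConst
  positivity

lemma varianceGammaPDFReal_nonneg (hr : 0 ≤ r) (θ v x : ℝ) :
    0 ≤ varianceGammaPDFReal r θ v x :=
  mul_nonneg (mul_nonneg (varianceGammaConst_nonneg hr v) (exp_pos _).le) (gigIntegral_nonneg _ _ _)

lemma measurable_varianceGammaPDFReal (r θ v : ℝ) : Measurable (varianceGammaPDFReal r θ v) := by
  have := measurable_gigIntegral ((r - 3) / 2) ((v + θ ^ 2) / (2 * v))
  unfold varianceGammaPDFReal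
  fun_prop

lemma gammaPDF_mul_gaussianPDF {s : ℝ} (hr : 0 < r) (hv : 0 < v) (hs : 0 < s) (θ x : ℝ) :
    gammaPDF (r / 2) (1 / 2) s * gaussianPDF (θ * s) (v * s).toNNReal x
      = ENNReal.ofReal (varianceGammaConst r v * exp (θ / v * x) * (s ^ ((r - 3) / 2)
        * exp (-((v + θ ^ 2) / (2 * v)) * s - (2 * v)⁻¹ * x ^ 2 / s))) := by
  have : 0 < Gamma (r / 2) := Gamma_pos_of_pos (half_pos hr)
  rw [gammaPDF_of_nonneg hs.le, gaussianPDF, ← ENNReal.ofReal_mul (by positivity),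
    gaussianPDFReal, coe_toNNReal _ (by positivity), varianceGammaConst]
  congr 1
  have hpow : s ^ ((r - 3) / 2) = s ^ (r / 2 - 1) * (√s)⁻¹ := by
    rw [sqrt_eq_rpow, ← rpow_neg hs.le, ← rpow_add hs]
    ring_nf
  have hsqrt : √(2 * π * (v * s)) = √(2 * π * v) * √s := by
    rw [← sqrt_mul (by positivity)]
    ring_nf
  have hexp : exp (-(1 / 2 * s)) * exp (-(x - θ * s) ^ 2 / (2 * (v * s)))
      = exp (θ / v * x) * exp (-((v + θ ^ 2) / (2 * v)) * s - (2 * v)⁻¹ * x ^ 2 / s) := by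
    rw [← exp_add, ← exp_add]
    congr 1
    field_simp
    ring
  rw [hpow, hsqrt, mul_inv]
  linear_combination (1 / 2 : ℝ) ^ (r / 2) / Gamma (r / 2) * s ^ (r / 2 - 1)
    * (√(2 * π * v))⁻¹ * (√s)⁻¹ * hexp

lemma gaussianReal_map_const_add_const_mul (m σ : ℝ) :
    (gaussianReal 0 1).map (fun y => m + σ * y) = gaussianReal m (σ ^ 2).toNNReal := by
  have hcomp : (fun y => m + σ * y) = (m + ·) ∘ (σ * ·) := rfl
  rw [hcomp, ← Measure.map_map (by fun_prop) (by fun_prop), gaussianReal_map_const_mul,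
    gaussianReal_map_const_add, mul_zero, zero_add, mul_one, toNNReal_of_nonneg (sq_nonneg σ)]

lemma lintegral_gaussianReal_affine {g : ℝ → ENNReal} (hg : Measurable g) (m : ℝ) {σ : ℝ}
    (hσ : σ ≠ 0) :
    ∫⁻ y, g (m + σ * y) ∂(gaussianReal 0 1) = ∫⁻ x, gaussianPDF m (σ ^ 2).toNNReal x * g x := by
  have hvar : (σ ^ 2).toNNReal ≠ 0 := (toNNReal_pos.2 (by positivity)).ne'
  rw [← lintegral_map (f := g) hg (g := fun y => m + σ * y) (by fun_prop),
    gaussianReal_map_const_add_const_mul, gaussianReal_of_var_ne_zero _ hvar,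
    lintegral_withDensity_eq_lintegral_mul _ (measurable_gaussianPDF _ _) hg]
  rfl

lemma lintegral_gammaMeasure {g : ℝ → ENNReal} (hg : Measurable g) (a b : ℝ) :
    ∫⁻ s, g s ∂(gammaMeasure a b) = ∫⁻ s in Ioi 0, gammaPDF a b s * g s := by
  rw [gammaMeasure, lintegral_withDensity_eq_lintegral_mul _ (by unfold gammaPDF; fun_prop) hg,
    ← lintegral_indicator measurableSet_Ioi]
  refine lintegral_congr_ae ?_
  filter_upwards [Measure.ae_ne volume (0 : ℝ)] with s hs
  rcases hs.lt_or_gt with hneg | hpos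
  · simp [gammaPDF_of_neg hneg, hneg.not_gt]
  · simp [mem_Ioi.2 hpos]

lemma setLIntegral_ofReal_gigIntegrand {a α β c : ℝ} (hα : 0 < α) (hβ : 0 < β) (hc : 0 ≤ c) :
    ∫⁻ s in Ioi (0 : ℝ), ENNReal.ofReal (c * (s ^ a * exp (-α * s - β / s)))
      = ENNReal.ofReal (c * gigIntegral a α β) := by
  rw [gigIntegral, ← integral_const_mul,
    ofReal_integral_eq_lintegral_ofReal ((integrableOn_gigIntegrand a hα hβ).const_mul c)]
  filter_upwards [ae_restrict_mem measurableSet_Ioi] with s hs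
  rw [mem_Ioi] at hs
  simp only [Pi.zero_apply]
  positivity

lemma varianceGamma_eq_withDensity (hr : 0 < r) (hv : 0 < v) (θ : ℝ) :
    varianceGamma r θ v
      = volume.withDensity fun x => ENNReal.ofReal (varianceGammaPDFReal r θ v x) := by
  have hmap : Measurable fun p : ℝ × ℝ => θ * p.1 + √(v * p.1) * p.2 := by fun_prop
  refine Measure.ext_of_lintegral _ fun g hg => ?_
  have hgm : Measurable fun p : ℝ × ℝ => g (θ * p.1 + √(v * p.1) * p.2) := hg.comp hmap
  rw [varianceGamma, lintegral_map hg hmap, lintegral_prod _ hgm.aemeasurable,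
    lintegral_gammaMeasure hgm.lintegral_prod_right',
    lintegral_withDensity_eq_lintegral_mul _
      (measurable_varianceGammaPDFReal r θ v).ennreal_ofReal hg]
  calc
    _ = ∫⁻ s in Ioi (0 : ℝ), ∫⁻ x, ENNReal.ofReal (varianceGammaConst r v * exp (θ / v * x)
          * (s ^ ((r - 3) / 2)
          * exp (-((v + θ ^ 2) / (2 * v)) * s - (2 * v)⁻¹ * x ^ 2 / s))) * g x := by
        refine setLIntegral_congr_fun measurableSet_Ioi fun s hs => ?_
        rw [mem_Ioi] at hs
        simp only
        rw [lintegral_gaussianReal_affine hg _ (by positivity), sq_sqrt (by positivity),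
          ← lintegral_const_mul _ (by fun_prop)]
        simp_rw [← mul_assoc, gammaPDF_mul_gaussianPDF hr hv hs, mul_assoc]
    _ = ∫⁻ x, ∫⁻ s in Ioi (0 : ℝ), ENNReal.ofReal (varianceGammaConst r v * exp (θ / v * x)
          * (s ^ ((r - 3) / 2)
          * exp (-((v + θ ^ 2) / (2 * v)) * s - (2 * v)⁻¹ * x ^ 2 / s))) * g x :=
        lintegral_lintegral_swap (Measurable.aemeasurable (by fun_prop))
    _ = _ := by
        refine lintegral_congr_ae ?_
        filter_upwards [Measure.ae_ne volume (0 : ℝ)] with x hx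
        have hconst := mul_nonneg (varianceGammaConst_nonneg hr.le v) (exp_pos (θ / v * x)).le
        rw [lintegral_mul_const _ (by fun_prop),
          setLIntegral_ofReal_gigIntegrand (by positivity) (by positivity) hconst]
        rfl

lemma integrable_varianceGamma_iff (hr : 0 < r) (hv : 0 < v) {θ : ℝ} {g : ℝ → ℝ} :
    Integrable g (varianceGamma r θ v)
      ↔ Integrable fun x => varianceGammaPDFReal r θ v x * g x := by
  rw [varianceGamma_eq_withDensity hr hv, integrable_withDensity_iff_integrable_smul'
    (measurable_varianceGammaPDFReal r θ v).ennreal_ofReal (by simp)]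
  simp only [ENNReal.toReal_ofReal (varianceGammaPDFReal_nonneg hr.le θ v _), smul_eq_mul]

lemma integral_varianceGamma (hr : 0 < r) (hv : 0 < v) (θ : ℝ) (g : ℝ → ℝ) :
    ∫ x, g x ∂(varianceGamma r θ v) = ∫ x, varianceGammaPDFReal r θ v x * g x := by
  rw [varianceGamma_eq_withDensity hr hv, integral_withDensity_eq_integral_toReal_smul
    (measurable_varianceGammaPDFReal r θ v).ennreal_ofReal (by simp)]
  simp only [ENNReal.toReal_ofReal (varianceGammaPDFReal_nonneg hr.le θ v _), smul_eq_mul]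

/-- Size-biasing a chi-squared variable `R` adds two degrees of freedom, so
`r * varianceGammaPDFReal (r + 2) θ v x` is `E[R | θ R + √(v R) V = x]` times the density at `x`. -/
lemma mul_varianceGammaPDFReal_add_two (hr : 0 < r) (θ v x : ℝ) :
    r * varianceGammaPDFReal (r + 2) θ v x = varianceGammaConst r v * exp (θ / v * x)
      * gigIntegral ((r - 3) / 2 + 1) ((v + θ ^ 2) / (2 * v)) ((2 * v)⁻¹ * x ^ 2) := by
  have : 0 < Gamma (r / 2) := Gamma_pos_of_pos (half_pos hr)
  have hconst : r * varianceGammaConst (r + 2) v = varianceGammaConst r v := by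
    have hhalf : (r + 2) / 2 = r / 2 + 1 := by ring
    rw [varianceGammaConst, varianceGammaConst, hhalf, rpow_add_one (by norm_num),
      Gamma_add_one (half_pos hr).ne']
    field_simp
  rw [varianceGammaPDFReal, ← hconst]
  ring_nf

lemma mul_varianceGammaPDFReal_add_two_le {x : ℝ} (hr : 0 < r) (hv : 0 < v) (θ : ℝ)
    (hx : x ≠ 0) :
    r * varianceGammaPDFReal (r + 2) θ v x
      ≤ (|x| / √(v + θ ^ 2) + (r + 1) * v / (v + θ ^ 2)) * varianceGammaPDFReal r θ v x := by
  have hJ := gigIntegral_add_one_le (a := (r - 3) / 2) (α := (v + θ ^ 2) / (2 * v))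
    (β := (2 * v)⁻¹ * x ^ 2) (by linarith) (by positivity) (by positivity)
  have hsqrt : √((2 * v)⁻¹ * x ^ 2 / ((v + θ ^ 2) / (2 * v))) = |x| / √(v + θ ^ 2) := by
    rw [← sqrt_sq_eq_abs, ← sqrt_div (sq_nonneg x)]
    congr 1
    field_simp
  have hconst : ((r - 3) / 2 + 2) / ((v + θ ^ 2) / (2 * v)) = (r + 1) * v / (v + θ ^ 2) := by
    field_simp
    ring
  rw [hsqrt, hconst] at hJ
  rw [mul_varianceGammaPDFReal_add_two hr, varianceGammaPDFReal, mul_left_comm]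
  exact mul_le_mul_of_nonneg_left hJ
    (mul_nonneg (varianceGammaConst_nonneg hr.le v) (exp_pos _).le)

lemma continuous_varianceGammaPDFReal (hr : 1 < r) (hv : 0 < v) (θ : ℝ) :
    Continuous (varianceGammaPDFReal r θ v) :=
  Continuous.mul (by fun_prop)
    (continuous_gigIntegral_sq (by linarith) (by positivity) (by positivity))

lemma continuous_mul_varianceGammaPDFReal (hr : 0 < r) (hv : 0 < v) (θ : ℝ) :
    Continuous fun x => x * varianceGammaPDFReal r θ v x := by
  have hcont := continuous_mul_gigIntegral_sq (a := (r - 3) / 2) (α := (v + θ ^ 2) / (2 * v))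
    (γ := (2 * v)⁻¹) (by linarith) (by positivity) (by positivity)
  have hexp : Continuous fun x => varianceGammaConst r v * exp (θ / v * x) := by fun_prop
  exact (hexp.mul hcont).congr fun x => mul_left_comm _ _ _

lemma hasDerivAt_exp_mul_gigIntegral_sq (a c θ : ℝ) {α v x : ℝ} (hα : 0 < α) (hv : 0 < v)
    (hx : x ≠ 0) :
    HasDerivAt (fun x => c * exp (θ / v * x) * gigIntegral a α ((2 * v)⁻¹ * x ^ 2))
      (c * exp (θ / v * x) * ((θ * gigIntegral a α ((2 * v)⁻¹ * x ^ 2)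
        - x * gigIntegral (a - 1) α ((2 * v)⁻¹ * x ^ 2)) / v)) x := by
  have hβ : HasDerivAt (fun x => (2 * v)⁻¹ * x ^ 2) (x / v) x := by
    refine ((hasDerivAt_pow 2 x).const_mul (2 * v)⁻¹).congr_deriv ?_
    field_simp
    norm_num
  have hexp : HasDerivAt (fun x => c * exp (θ / v * x)) (c * (exp (θ / v * x) * (θ / v))) x := by
    simpa using (((hasDerivAt_id x).const_mul (θ / v)).exp).const_mul c
  refine (hexp.mul ((hasDerivAt_gigIntegral a hα (by positivity)).comp x hβ)).congr_deriv ?_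
  simp only [Function.comp_apply]
  field_simp
  ring

lemma hasDerivAt_mul_varianceGammaPDFReal_add_two {x : ℝ} (hr : 0 < r) (hv : 0 < v) (θ : ℝ)
    (hx : x ≠ 0) :
    HasDerivAt (fun x => r * varianceGammaPDFReal (r + 2) θ v x)
      ((θ * (r * varianceGammaPDFReal (r + 2) θ v x) - x * varianceGammaPDFReal r θ v x) / v)
      x := by
  simp only [mul_varianceGammaPDFReal_add_two hr]
  refine (hasDerivAt_exp_mul_gigIntegral_sq _ _ θ (by positivity) hv hx).congr_deriv ?_
  rw [varianceGammaPDFReal, add_sub_cancel_right]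
  ring

lemma hasDerivAt_id_mul_varianceGammaPDFReal {x : ℝ} (hr : 0 < r) (hv : 0 < v) (θ : ℝ)
    (hx : x ≠ 0) :
    HasDerivAt (fun x => x * varianceGammaPDFReal r θ v x)
      (r * varianceGammaPDFReal r θ v x + (θ * (x * varianceGammaPDFReal r θ v x)
        - (v + θ ^ 2) * (r * varianceGammaPDFReal (r + 2) θ v x)) / v) x := by
  have hα : 0 < (v + θ ^ 2) / (2 * v) := by positivity
  have hrec := gigIntegral_recurrence ((r - 3) / 2 + 1) hα (β := (2 * v)⁻¹ * x ^ 2) (by positivity)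
  rw [add_sub_cancel_right, show (r - 3) / 2 + 1 - 2 = (r - 3) / 2 - 1 by ring] at hrec
  refine ((hasDerivAt_id x).mul (hasDerivAt_exp_mul_gigIntegral_sq ((r - 3) / 2)
    (varianceGammaConst r v) θ hα hv hx)).congr_deriv ?_
  rw [mul_varianceGammaPDFReal_add_two hr, varianceGammaPDFReal, id]
  field_simp at hrec ⊢
  linear_combination varianceGammaConst r v * hrec

/-! ### The Stein identity -/

lemma integrable_varianceGammaPDFReal_add_two_mul {θ : ℝ} (hr : 0 < r) (hv : 0 < v)
    {f : ℝ → ℝ} (hfm : Measurable f) (hf : Integrable f (varianceGamma r θ v))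
    (hxf : Integrable (fun x => x * f x) (varianceGamma r θ v)) :
    Integrable fun x => r * varianceGammaPDFReal (r + 2) θ v x * f x := by
  rw [integrable_varianceGamma_iff hr hv] at hf hxf
  refine Integrable.mono' ((hxf.norm.div_const √(v + θ ^ 2)).add
    (hf.norm.const_mul ((r + 1) * v / (v + θ ^ 2)))) ?_ ?_
  · have := measurable_varianceGammaPDFReal (r + 2) θ v
    fun_prop
  filter_upwards [Measure.ae_ne volume (0 : ℝ)] with x hx
  have hp := varianceGammaPDFReal_nonneg hr.le θ v x
  have hq := varianceGammaPDFReal_nonneg (r := r + 2) (by linarith) θ v x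
  rw [norm_mul, norm_of_nonneg (mul_nonneg hr.le hq), Pi.add_apply, norm_mul, norm_mul, norm_mul,
    norm_of_nonneg hp, norm_eq_abs x]
  calc r * varianceGammaPDFReal (r + 2) θ v x * ‖f x‖
      ≤ (|x| / √(v + θ ^ 2) + (r + 1) * v / (v + θ ^ 2)) * varianceGammaPDFReal r θ v x * ‖f x‖ :=
        mul_le_mul_of_nonneg_right (mul_varianceGammaPDFReal_add_two_le hr hv θ hx) (norm_nonneg _)
    _ = varianceGammaPDFReal r θ v x * (|x| * ‖f x‖) / √(v + θ ^ 2)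
        + (r + 1) * v / (v + θ ^ 2) * (varianceGammaPDFReal r θ v x * ‖f x‖) := by ring

/-- The antiderivative, on each side of `0`, of the density of `varianceGamma r θ v` times the Stein
operator `v x f'' + (r v + 2 θ x) f' - (x - r θ) f`. -/
noncomputable def varianceGammaSteinFlux (r θ v : ℝ) (f : ℝ → ℝ) (x : ℝ) : ℝ :=
  v * (x * varianceGammaPDFReal r θ v x) * deriv f x
    + (θ * (x * varianceGammaPDFReal r θ v x)
      + (v + θ ^ 2) * (r * varianceGammaPDFReal (r + 2) θ v x)) * f x

lemma continuous_varianceGammaSteinFlux (hr : 0 < r) (hv : 0 < v) (θ : ℝ) {f : ℝ → ℝ}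
    (hf : Continuous f) (hf' : Continuous (deriv f)) :
    Continuous (varianceGammaSteinFlux r θ v f) := by
  have := continuous_mul_varianceGammaPDFReal hr hv θ
  have := continuous_varianceGammaPDFReal (r := r + 2) (by linarith) hv θ
  unfold varianceGammaSteinFlux
  fun_prop

lemma hasDerivAt_varianceGammaSteinFlux {x : ℝ} (hr : 0 < r) (hv : 0 < v) (θ : ℝ) (hx : x ≠ 0)
    {f : ℝ → ℝ} (hf : DifferentiableAt ℝ f x) (hf' : DifferentiableAt ℝ (deriv f) x) :
    HasDerivAt (varianceGammaSteinFlux r θ v f)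
      (varianceGammaPDFReal r θ v x * (v * x * deriv (deriv f) x
        + (r * v + 2 * θ * x) * deriv f x - (x - r * θ) * f x)) x := by
  have hp := hasDerivAt_id_mul_varianceGammaPDFReal hr hv θ hx
  have hq := hasDerivAt_mul_varianceGammaPDFReal_add_two hr hv θ hx
  refine (((hp.const_mul v).mul hf'.hasDerivAt).add
    (((hp.const_mul θ).add (hq.const_mul (v + θ ^ 2))).mul hf.hasDerivAt)).congr_deriv ?_
  simp only [Pi.add_apply]
  field_simp
  ring

lemma integrable_varianceGammaSteinFlux {θ : ℝ} (hr : 0 < r) (hv : 0 < v) {f : ℝ → ℝ}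
    (hfm : Measurable f) (hf : Integrable f (varianceGamma r θ v))
    (hxf : Integrable (fun x => x * f x) (varianceGamma r θ v))
    (hxf' : Integrable (fun x => x * deriv f x) (varianceGamma r θ v)) :
    Integrable (varianceGammaSteinFlux r θ v f) := by
  have hq := (integrable_varianceGammaPDFReal_add_two_mul hr hv hfm hf hxf).const_mul (v + θ ^ 2)
  rw [integrable_varianceGamma_iff hr hv] at hxf hxf'
  refine (((hxf'.const_mul v).add (hxf.const_mul θ)).add hq).congr (ae_of_all _ fun x => ?_)
  simp only [varianceGammaSteinFlux, Pi.add_apply]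
  ring

lemma integral_varianceGamma_stein {θ : ℝ} (hr : 0 < r) (hv : 0 < v) {f : ℝ → ℝ}
    (hf : Differentiable ℝ f) (hf' : Differentiable ℝ (deriv f))
    (h : Integrable f (varianceGamma r θ v))
    (hx : Integrable (fun x => x * f x) (varianceGamma r θ v))
    (h' : Integrable (deriv f) (varianceGamma r θ v))
    (hx' : Integrable (fun x => x * deriv f x) (varianceGamma r θ v))
    (hx'' : Integrable (fun x => x * deriv (deriv f) x) (varianceGamma r θ v)) :
    ∫ x, (x - r * θ) * f x ∂(varianceGamma r θ v)
      = ∫ x, (v * x * deriv (deriv f) x + (r * v + 2 * θ * x) * deriv f x)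
          ∂(varianceGamma r θ v) := by
  have hlhs : Integrable (fun x => (x - r * θ) * f x) (varianceGamma r θ v) := by
    refine (hx.sub (h.const_mul (r * θ))).congr (ae_of_all _ fun x => ?_)
    simp only [Pi.sub_apply]
    ring
  have hrhs : Integrable (fun x => v * x * deriv (deriv f) x + (r * v + 2 * θ * x) * deriv f x)
      (varianceGamma r θ v) := by
    refine ((hx''.const_mul v).add ((h'.const_mul (r * v)).add (hx'.const_mul (2 * θ)))).congr
      (ae_of_all _ fun x => ?_)
    simp only [Pi.add_apply]
    ring
  refine (sub_eq_zero.1 ?_).symm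
  rw [← integral_sub hrhs hlhs, integral_varianceGamma hr hv]
  exact integral_eq_zero_of_hasDerivAt_of_ne_of_integrable
    (continuous_varianceGammaSteinFlux hr hv θ hf.continuous hf'.continuous).continuousAt
    (fun x hx0 => hasDerivAt_varianceGammaSteinFlux hr hv θ hx0 (hf x) (hf' x))
    ((integrable_varianceGamma_iff hr hv).1 (hrhs.sub hlhs))
    (integrable_varianceGammaSteinFlux hr hv hf.continuous.measurable h hx hx')

end

/-- Stein-type identity for the sum `W = Z₁ + ⋯ + Zₙ` of `n ≥ 1` i.i.d. copies of the product
`Z = XY` of zero mean correlated normals: for every twice differentiable `f` with the stated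
integrability conditions,
`E[(W − nρ) f(W)] = E[(1 − ρ²) W f''(W) + (n(1 − ρ²) + 2ρW) f'(W)]`. -/
theorem sum_product_normal_stein_identity
    {Ω : Type*} [MeasurableSpace Ω] (P : Measure Ω) [IsProbabilityMeasure P]
    (ρ : ℝ) (hρ : ρ ∈ Set.Ioo (-1 : ℝ) 1) (n : ℕ) (hn : 1 ≤ n)
    (Zs : Fin n → Ω → ℝ) (hmeas : ∀ i, Measurable (Zs i))
    (hindep : iIndepFun Zs P)
    (hlaw : ∀ i, P.map (Zs i) = lawZ ρ)
    (W : Ω → ℝ) (hW : ∀ ω, W ω = ∑ i, Zs i ω)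
    (f : ℝ → ℝ) (hf : Differentiable ℝ f) (hf' : Differentiable ℝ (deriv f))
    (h1 : Integrable (fun ω => f (W ω)) P)
    (h2 : Integrable (fun ω => W ω * f (W ω)) P)
    (h3 : Integrable (fun ω => deriv f (W ω)) P)
    (h4 : Integrable (fun ω => W ω * deriv f (W ω)) P)
    (h5 : Integrable (fun ω => W ω * deriv (deriv f) (W ω)) P) :
    ∫ ω, (W ω - n * ρ) * f (W ω) ∂P
      = ∫ ω, ((1 - ρ ^ 2) * W ω * deriv (deriv f) (W ω)
          + (n * (1 - ρ ^ 2) + 2 * ρ * W ω) * deriv f (W ω)) ∂P := by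
  have : Nonempty (Fin n) := ⟨⟨0, hn⟩⟩
  have hr : (0 : ℝ) < n := mod_cast hn
  have hv : 0 < 1 - ρ ^ 2 := by nlinarith [hρ.1, hρ.2]
  have hsum : HasLaw W (varianceGamma n ρ (1 - ρ ^ 2)) P := by
    have hZ : ∀ i, HasLaw (Zs i) (varianceGamma 1 ρ (1 - ρ ^ 2)) P := fun i =>
      ⟨(hmeas i).aemeasurable, (hlaw i).trans (lawZ_eq_varianceGamma (by linarith))⟩
    simpa [funext hW] using hasLaw_sum_varianceGamma (fun _ => one_pos) hv.le hindep hZ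
  have hf₀ := hf.continuous.measurable
  have htransfer : ∀ {g : ℝ → ℝ}, Measurable g → Integrable (fun ω => g (W ω)) P →
      Integrable g (varianceGamma n ρ (1 - ρ ^ 2)) := fun hg hgW => by
    rw [← hsum.map_eq]
    exact (integrable_map_measure hg.aestronglyMeasurable hsum.aemeasurable).2 hgW
  have hstein := integral_varianceGamma_stein hr hv hf hf' (htransfer hf₀ h1)
    (htransfer (measurable_id.mul hf₀) h2) (htransfer (measurable_deriv f) h3)
    (htransfer (measurable_id.mul (measurable_deriv f)) h4)
    (htransfer (measurable_id.mul (measurable_deriv _)) h5)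
  rwa [← hsum.integral_comp (by fun_prop), ← hsum.integral_comp (by fun_prop)] at hstein
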